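/- arXiv:math/0406242 — 2 statements merged into one kernel-verified Lean document; each statement's English description precedes it below -/
import Mathlib

section
/- Let γ : ℝ → ℝ³, γ(t) = (x_t, y_t, z_t), be a path, differentiable at 0, such that x_t + y_t + z_t = π and x_t, y_t, z_t ≥ 0 for all t in some interval [0, δ) with δ > 0, with x₀, y₀ ∈ (0, π), z₀ = 0 and (dz_t/dt)|_{t=0} > 0. Then the right difference quotient of the volume tends to +∞: the function t ↦ (𝒱(x_t,y_t,z_t) − 𝒱(x₀,y₀,z₀))/t tends to +∞ as t → 0⁺ (i.e., along the filter 𝓝[>] 0). -/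
/-- The Lobachevsky-type integral `∫₀ˣ log(2 sin u) du`. -/
noncomputable def lob (x : ℝ) : ℝ := ∫ u in (0:ℝ)..x, Real.log (2 * Real.sin u)

/-- The volume `𝒱(x,y,z)` of the ideal hyperbolic tetrahedron with dihedral angles
`x, y, z`. -/
noncomputable def idealVol (p : ℝ × ℝ × ℝ) : ℝ := -lob p.1 - lob p.2.1 - lob p.2.2

/-!
At an angle in `(0, π)` the function `lob` is differentiable, so the two nondegenerate angles
contribute finite slopes. At `0` it has right derivative `-∞`, because `sin u ≤ u` gives
`lob a ≤ a * log (2 * a)`. As the vanishing angle leaves `0` at positive speed, its contribution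
to the slope of the volume is `+∞`.
-/

open Filter Set Topology

lemma slope_comp_eq_mul {k : Type*} [Field k] (f z : k → k) (t₀ t : k) :
    slope (f ∘ z) t₀ t = slope z t₀ t * slope f (z t₀) (z t) := by
  rw [← smul_eq_mul, slope_def_module z, smul_assoc, sub_smul_slope, slope_def_module]
  rfl

section InfiniteDerivative

variable {f z : ℝ → ℝ} {z' t₀ : ℝ}

lemma tendsto_nhdsGT_of_hasDerivWithinAt_pos (hz : HasDerivWithinAt z z' (Ioi t₀) t₀)
    (hz' : 0 < z') : Tendsto z (𝓝[>] t₀) (𝓝[>] (z t₀)) := by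
  have hslope : Tendsto (slope z t₀) (𝓝[>] t₀) (𝓝 z') :=
    (hasDerivWithinAt_iff_tendsto_slope' self_notMem_Ioi).1 hz
  refine tendsto_nhdsWithin_iff.2 ⟨hz.continuousWithinAt, ?_⟩
  filter_upwards [hslope.eventually_const_lt hz', self_mem_nhdsWithin] with t hpos ht
  exact (slope_pos_iff_of_le ht.le).1 hpos

lemma tendsto_slope_comp_atBot (hf : Tendsto (slope f (z t₀)) (𝓝[>] (z t₀)) atBot)
    (hz : HasDerivWithinAt z z' (Ioi t₀) t₀) (hz' : 0 < z') :
    Tendsto (slope (f ∘ z) t₀) (𝓝[>] t₀) atBot := by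
  have hslope : Tendsto (slope z t₀) (𝓝[>] t₀) (𝓝 z') :=
    (hasDerivWithinAt_iff_tendsto_slope' self_notMem_Ioi).1 hz
  have hright := tendsto_nhdsGT_of_hasDerivWithinAt_pos hz hz'
  exact (hslope.pos_mul_atBot hz' (hf.comp hright)).congr
    fun t => (slope_comp_eq_mul f z t₀ t).symm

end InfiniteDerivative

lemma intervalIntegrable_log_two_mul_sin (a b : ℝ) :
    IntervalIntegrable (fun u => Real.log (2 * Real.sin u)) MeasureTheory.volume a b :=
  MeromorphicOn.intervalIntegrable_log fun u _ =>
    AnalyticAt.meromorphicAt (f := fun u => 2 * Real.sin u) (by fun_prop)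

lemma lob_zero : lob 0 = 0 := intervalIntegral.integral_same

lemma hasDerivAt_lob {a : ℝ} (ha : Real.sin a ≠ 0) :
    HasDerivAt lob (Real.log (2 * Real.sin a)) a := by
  have hmeas : Measurable fun u => Real.log (2 * Real.sin u) := by fun_prop
  have hcont : ContinuousAt (fun u => Real.log (2 * Real.sin u)) a :=
    ContinuousAt.log (by fun_prop) (mul_ne_zero two_ne_zero ha)
  exact intervalIntegral.integral_hasDerivAt_right (intervalIntegrable_log_two_mul_sin 0 a)
    hmeas.stronglyMeasurable.stronglyMeasurableAtFilter hcont

lemma lob_le_mul_log {a : ℝ} (ha : 0 ≤ a) (ha' : a ≤ Real.pi) :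
    lob a ≤ a * Real.log (2 * a) := by
  have hlog : ∀ u ∈ Ioo 0 a, Real.log (2 * Real.sin u) ≤ Real.log (2 * a) := by
    intro u hu
    have hsin : 0 < Real.sin u := Real.sin_pos_of_pos_of_lt_pi hu.1 (hu.2.trans_le ha')
    have hle : Real.sin u ≤ a := (Real.sin_le hu.1.le).trans hu.2.le
    gcongr
  calc lob a ≤ ∫ _ in (0 : ℝ)..a, Real.log (2 * a) :=
        intervalIntegral.integral_mono_on_of_le_Ioo ha (intervalIntegrable_log_two_mul_sin 0 a)
          intervalIntegrable_const hlog
    _ = a * Real.log (2 * a) := by simp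

lemma tendsto_slope_lob_zero_atBot : Tendsto (slope lob 0) (𝓝[>] 0) atBot := by
  have htwo : Tendsto (fun a : ℝ => 2 * a) (𝓝[>] 0) (𝓝[>] 0) := by
    simpa using tendsto_nhdsGT_of_hasDerivWithinAt_pos
      ((hasDerivAt_id (0 : ℝ)).const_mul 2).hasDerivWithinAt (by norm_num)
  refine tendsto_atBot_mono' _ ?_ (Real.tendsto_log_nhdsGT_zero.comp htwo)
  filter_upwards [Ioo_mem_nhdsGT Real.pi_pos] with a ha
  rw [slope_def_field, lob_zero, sub_zero, sub_zero, div_le_iff₀' ha.1]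
  exact lob_le_mul_log ha.1.le ha.2.le

lemma tendsto_slope_lob_comp {x : ℝ → ℝ} {x' t₀ : ℝ}
    (hx : HasDerivWithinAt x x' (Ioi t₀) t₀) (hx₀ : Real.sin (x t₀) ≠ 0) :
    Tendsto (slope (lob ∘ x) t₀) (𝓝[>] t₀) (𝓝 (Real.log (2 * Real.sin (x t₀)) * x')) :=
  (hasDerivWithinAt_iff_tendsto_slope' self_notMem_Ioi).1
    ((hasDerivAt_lob hx₀).comp_hasDerivWithinAt t₀ hx)

lemma slope_idealVol (x y z : ℝ → ℝ) (t₀ t : ℝ) :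
    slope (fun t => idealVol (x t, y t, z t)) t₀ t =
      -(slope (lob ∘ x) t₀ t + slope (lob ∘ y) t₀ t) + -slope (lob ∘ z) t₀ t := by
  simp only [slope_def_field, idealVol, Function.comp_apply]
  ring

theorem simple_degeneracy_general {x y z : ℝ → ℝ} {x' y' z' t₀ : ℝ}
    (hx : HasDerivWithinAt x x' (Ioi t₀) t₀) (hy : HasDerivWithinAt y y' (Ioi t₀) t₀)
    (hz : HasDerivWithinAt z z' (Ioi t₀) t₀) (hz' : 0 < z')
    (hx₀ : x t₀ ∈ Ioo 0 Real.pi) (hy₀ : y t₀ ∈ Ioo 0 Real.pi) (hz₀ : z t₀ = 0) :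
    Tendsto (slope (fun t => idealVol (x t, y t, z t)) t₀) (𝓝[>] t₀) atTop := by
  have hlobx := tendsto_slope_lob_comp hx (Real.sin_pos_of_mem_Ioo hx₀).ne'
  have hloby := tendsto_slope_lob_comp hy (Real.sin_pos_of_mem_Ioo hy₀).ne'
  have hlobz : Tendsto (slope (lob ∘ z) t₀) (𝓝[>] t₀) atBot :=
    tendsto_slope_comp_atBot (hz₀.symm ▸ tendsto_slope_lob_zero_atBot) hz hz'
  exact ((hlobx.add hloby).neg.add_atTop (tendsto_neg_atBot_atTop.comp hlobz)).congr
    fun t => (slope_idealVol x y z t₀ t).symm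

/-- Simple degeneracy: along a path of angle triples, differentiable at `0`, with
`x₀, y₀ ∈ (0,π)`, `z₀ = 0` and `(dz/dt)|₀ > 0`, the right difference quotient of the
volume tends to `+∞` as `t → 0⁺`. -/
theorem simple_degeneracy (x y z : ℝ → ℝ) (X Y Z δ : ℝ) (hδ : 0 < δ)
    (hx : HasDerivAt x X 0) (hy : HasDerivAt y Y 0) (hz : HasDerivAt z Z 0)
    (hZ : 0 < Z)
    (hsum : ∀ t ∈ Set.Ico 0 δ, x t + y t + z t = Real.pi)
    (hnonneg : ∀ t ∈ Set.Ico 0 δ, 0 ≤ x t ∧ 0 ≤ y t ∧ 0 ≤ z t)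
    (hx0 : x 0 ∈ Set.Ioo 0 Real.pi) (hy0 : y 0 ∈ Set.Ioo 0 Real.pi) (hz0 : z 0 = 0) :
    Filter.Tendsto
      (fun t => (idealVol (x t, y t, z t) - idealVol (x 0, y 0, z 0)) / t)
      (nhdsWithin 0 (Set.Ioi 0)) Filter.atTop := by
  simpa only [slope_fun_def_field, sub_zero] using simple_degeneracy_general
    hx.hasDerivWithinAt hy.hasDerivWithinAt hz.hasDerivWithinAt hZ hx0 hy0 hz0
end

section
/- For all real x, y, z with x ≥ 0, y ≥ 0, z ≥ 0 and x + y + z = π, one has 𝒱(x, y, z) ≤ 𝒱(π/3, π/3, π/3). That is, among ideal hyperbolic tetrahedra, the regular ideal tetrahedron (all dihedral angles π/3) has maximal volume v₃ = 𝒱(π/3, π/3, π/3) = −3·∫₀^{π/3} log(2 sin u) du. -/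
/-!
Let `x` be the largest of the three angles, so that `y, z ≤ π/2`. As `log (2 sin u)` increases on
`(0, π/2]`, `lob` is convex on `[0, π/2]`, so replacing `y` and `z` by their mean does not decrease
the volume. Along the resulting family of isosceles tetrahedra, with angles
`x, (π - x)/2, (π - x)/2`, the derivative of the volume collapses to `-log (2 sin (x/2))` because
`2 sin x = (2 sin (x/2)) (2 cos (x/2))`. It is nonpositive for `π/3 ≤ x ≤ π`, so on this range the
volume is largest at `x = π/3`.
-/

open Real Set MeasureTheory

theorem intervalIntegrable_log_two_mul_sin_s18 (a b : ℝ) :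
    IntervalIntegrable (fun u ↦ log (2 * sin u)) volume a b :=
  MeromorphicOn.intervalIntegrable_log fun _ _ ↦
    (analyticAt_const.mul analyticAt_sin).meromorphicAt

theorem continuous_lob : Continuous lob :=
  intervalIntegral.continuous_primitive intervalIntegrable_log_two_mul_sin_s18 0

theorem hasDerivAt_lob_s18 {x : ℝ} (hx : sin x ≠ 0) : HasDerivAt lob (log (2 * sin x)) x := by
  have hcont : ContinuousAt (fun u ↦ log (2 * sin u)) x :=
    ContinuousAt.log (by fun_prop) (mul_ne_zero two_ne_zero hx)
  have hmeas : Measurable fun u ↦ log (2 * sin u) := by fun_prop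
  exact intervalIntegral.integral_hasDerivAt_right (intervalIntegrable_log_two_mul_sin_s18 0 x)
    hmeas.stronglyMeasurable.stronglyMeasurableAtFilter hcont

theorem monotoneOn_log_two_mul_sin : MonotoneOn (fun u ↦ log (2 * sin u)) (Ioc 0 (π / 2)) := by
  intro a ha b hb hab
  have hsin_pos : 0 < sin a := sin_pos_of_pos_of_lt_pi ha.1 (by linarith [ha.2, pi_pos])
  have hsin_le : sin a ≤ sin b :=
    sin_le_sin_of_le_of_le_pi_div_two (by linarith [ha.1, pi_pos]) hb.2 hab
  exact log_le_log (by positivity) (by gcongr)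

theorem convexOn_lob : ConvexOn ℝ (Icc 0 (π / 2)) lob := by
  have hderiv : ∀ u ∈ Ioo 0 (π / 2), HasDerivAt lob (log (2 * sin u)) u := fun u hu ↦
    hasDerivAt_lob_s18 (sin_pos_of_pos_of_lt_pi hu.1 (by linarith [hu.2, pi_pos])).ne'
  refine MonotoneOn.convexOn_of_deriv (convex_Icc _ _) continuous_lob.continuousOn ?_ ?_ <;>
    rw [interior_Icc]
  · exact fun u hu ↦ (hderiv u hu).differentiableAt.differentiableWithinAt
  · exact (monotoneOn_log_two_mul_sin.mono Ioo_subset_Ioc_self).congr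
      fun u hu ↦ (hderiv u hu).deriv.symm

theorem idealVol_rotate (x y z : ℝ) : idealVol (x, y, z) = idealVol (y, z, x) := by
  simp only [idealVol]
  ring

theorem idealVol_le_isosceles (x : ℝ) {y z : ℝ} (hy : y ∈ Icc 0 (π / 2))
    (hz : z ∈ Icc 0 (π / 2)) :
    idealVol (x, y, z) ≤ idealVol (x, (y + z) / 2, (y + z) / 2) := by
  have hmid : lob ((y + z) / 2) ≤ (lob y + lob z) / 2 := by
    have hconv := convexOn_lob.2 hy hz one_half_pos.le one_half_pos.le (add_halves 1)
    simpa only [smul_eq_mul, one_div_mul_eq_div, ← add_div] using hconv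
  simp only [idealVol]
  linarith

theorem sin_eq_two_mul_sin_half_mul_sin_half_pi_sub (x : ℝ) :
    sin x = 2 * sin (x / 2) * sin ((π - x) / 2) := by
  rw [sub_div, sin_pi_div_two_sub, ← sin_two_mul, mul_div_cancel₀ x two_ne_zero]

theorem log_two_mul_sin_eq_add {x : ℝ} (hx : sin x ≠ 0) :
    log (2 * sin x) = log (2 * sin (x / 2)) + log (2 * sin ((π - x) / 2)) := by
  rw [sin_eq_two_mul_sin_half_mul_sin_half_pi_sub] at hx ⊢
  rw [mul_left_comm, log_mul (left_ne_zero_of_mul hx)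
    (mul_ne_zero two_ne_zero (right_ne_zero_of_mul hx))]

theorem hasDerivAt_idealVol_isosceles {x : ℝ} (hx : sin x ≠ 0) :
    HasDerivAt (fun u ↦ idealVol (u, (π - u) / 2, (π - u) / 2)) (-log (2 * sin (x / 2))) x := by
  have hbase_ne : sin ((π - x) / 2) ≠ 0 :=
    right_ne_zero_of_mul (sin_eq_two_mul_sin_half_mul_sin_half_pi_sub x ▸ hx)
  have hbase : HasDerivAt (fun u ↦ (π - u) / 2) (-1 / 2) x :=
    ((hasDerivAt_id x).const_sub π).div_const 2
  have hlob_base := (hasDerivAt_lob_s18 hbase_ne).comp x hbase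
  refine (((hasDerivAt_lob_s18 hx).neg.sub hlob_base).sub hlob_base).congr_deriv ?_
  rw [log_two_mul_sin_eq_add hx]
  ring

theorem antitoneOn_idealVol_isosceles :
    AntitoneOn (fun x ↦ idealVol (x, (π - x) / 2, (π - x) / 2)) (Icc (π / 3) π) := by
  have hcont : Continuous fun x ↦ idealVol (x, (π - x) / 2, (π - x) / 2) := by
    have := continuous_lob
    unfold idealVol
    fun_prop
  refine antitoneOn_of_hasDerivWithinAt_nonpos (convex_Icc _ _) hcont.continuousOn
    (f' := fun x ↦ -log (2 * sin (x / 2))) ?_ ?_ <;>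
    rw [interior_Icc] <;> intro x hx
  · have hsin : 0 < sin x := sin_pos_of_pos_of_lt_pi (by linarith [hx.1, pi_pos]) hx.2
    exact (hasDerivAt_idealVol_isosceles hsin.ne').hasDerivWithinAt
  · have hsin : 1 / 2 ≤ sin (x / 2) := by
      rw [← sin_pi_div_six]
      exact sin_le_sin_of_le_of_le_pi_div_two (by linarith [pi_pos]) (by linarith [hx.2])
        (by linarith [hx.1])
    exact neg_nonpos.2 (log_nonneg (by linarith))

theorem idealVol_le_regular_of_le {x y z : ℝ} (hy : 0 ≤ y) (hz : 0 ≤ z) (hsum : x + y + z = π)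
    (hyx : y ≤ x) (hzx : z ≤ x) :
    idealVol (x, y, z) ≤ idealVol (π / 3, π / 3, π / 3) :=
  calc
    idealVol (x, y, z) ≤ idealVol (x, (y + z) / 2, (y + z) / 2) :=
      idealVol_le_isosceles x ⟨hy, by linarith⟩ ⟨hz, by linarith⟩
    _ = idealVol (x, (π - x) / 2, (π - x) / 2) := by
      rw [← hsum, add_assoc, add_sub_cancel_left]
    _ ≤ idealVol (π / 3, (π - π / 3) / 2, (π - π / 3) / 2) :=
      antitoneOn_idealVol_isosceles ⟨le_rfl, by linarith [pi_pos]⟩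
        ⟨by linarith, by linarith⟩ (by linarith)
    _ = idealVol (π / 3, π / 3, π / 3) := by
      rw [show (π - π / 3) / 2 = π / 3 by ring]

/-- Among ideal hyperbolic tetrahedra, the regular ideal tetrahedron (all dihedral
angles `π/3`) has maximal volume `v₃ = −3 ∫₀^{π/3} log(2 sin u) du`. -/
theorem regular_ideal_tetrahedron_maximal_volume :
    (∀ x y z : ℝ, 0 ≤ x → 0 ≤ y → 0 ≤ z → x + y + z = Real.pi →
      idealVol (x, y, z) ≤ idealVol (Real.pi / 3, Real.pi / 3, Real.pi / 3)) ∧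
    idealVol (Real.pi / 3, Real.pi / 3, Real.pi / 3) =
      -(3 * ∫ u in (0:ℝ)..(Real.pi / 3), Real.log (2 * Real.sin u)) := by
  constructor
  · intro x y z hx hy hz hsum
    rcases le_total y x with hyx | hxy
    · rcases le_total z x with hzx | hxz
      · exact idealVol_le_regular_of_le hy hz hsum hyx hzx
      · rw [← idealVol_rotate]
        exact idealVol_le_regular_of_le hx hy (by linarith) hxz (hyx.trans hxz)
    · rcases le_total z y with hzy | hyz
      · rw [idealVol_rotate]
        exact idealVol_le_regular_of_le hz hx (by linarith) hzy hxy
      · rw [← idealVol_rotate]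
        exact idealVol_le_regular_of_le hx hy (by linarith) (hxy.trans hyz) hyz
  · simp only [idealVol, lob]
    ring
end
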